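/- For correlated Erdős–Rényi random graphs (G_a, G_b) with structures S_a, S_b, the quantity (1/C(n,2)) log(1/P_{G_a|S_b}(G_a | S_b)) converges in probability to H(A|B) as n → ∞. -/

import Mathlib

open Finset Filter

namespace GraphSI

/-- A (weighted) graph on vertex set `Fin n` with marks in `α`, identified with the
function assigning a mark to each unordered pair of vertices. -/
abbrev Graph (n : ℕ) (α : Type*) := Sym2 (Fin n) → α

/-- Relabeling of the vertices of a graph by a permutation `π`:
the `(i,j)` entry of `π(g)` is the `(π⁻¹ i, π⁻¹ j)` entry of `g`. -/
def relabel {n : ℕ} {α : Type*} (π : Equiv.Perm (Fin n)) (g : Graph n α) : Graph n α :=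
  fun e => g (e.map π.symm)

/-- The unordered pairs `{i,j}` with `i ≠ j` (i.e. the pairs `i < j`). -/
def edgePairs (n : ℕ) : Finset (Sym2 (Fin n)) :=
  Finset.univ.filter (fun e => ¬ e.IsDiag)

/-- Joint probability of a pair of graphs under the correlated Erdős–Rényi model with
per-edge joint mark distribution `P`. -/
def cer {n : ℕ} {α β : Type*} (P : α × β → ℝ) (ga : Graph n α) (gb : Graph n β) : ℝ :=
  ∏ e ∈ edgePairs n, P (ga e, gb e)

/-- Probability of a graph under the Erdős–Rényi model with i.i.d. edge marks `P`. -/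
def erP {n : ℕ} {β : Type*} (P : β → ℝ) (g : Graph n β) : ℝ :=
  ∏ e ∈ edgePairs n, P (g e)

/-- Base-2 Shannon entropy of a pmf on a finite type (with the convention 0 log 0 = 0). -/
noncomputable def H2 {γ : Type*} [Fintype γ] (P : γ → ℝ) : ℝ :=
  ∑ x, P x * Real.logb 2 (P x)⁻¹

/-- Conditional entropy `H(A|B) = H(A,B) - H(B)` for a joint pmf on `α × β`. -/
noncomputable def condH {α β : Type*} [Fintype α] [Fintype β] (P : α × β → ℝ) : ℝ :=
  H2 P - H2 (fun b => ∑ a, P (a, b))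

/-- `C(n,2) = n(n-1)/2` as a real number. -/
def Cn2 (n : ℕ) : ℝ := n.choose 2

/-- Probability of an event under a pmf on a finite sample space. -/
noncomputable def prob {Ω : Type*} [Fintype Ω] (P : Ω → ℝ) (E : Set Ω) : ℝ :=
  ∑ ω, E.indicator P ω

/-- Maximum of a real-valued function over all permutations of `[n]`. -/
def maxPerm {n : ℕ} (f : Equiv.Perm (Fin n) → ℝ) : ℝ :=
  Finset.univ.sup' ⟨1, Finset.mem_univ 1⟩ f

instance {n : ℕ} {γ : Type*} [DecidableEq γ] (g : Graph n γ) :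
    DecidablePred (fun g' : Graph n γ => ∃ π : Equiv.Perm (Fin n), relabel π g = g') :=
  fun _ => Fintype.decidableExistsFintype

/-- Sum of `f` over the isomorphism class (the structure) of `g`. -/
def isoSum {n : ℕ} {γ : Type*} [Fintype γ] [DecidableEq γ]
    (f : Graph n γ → ℝ) (g : Graph n γ) : ℝ :=
  ∑ g' ∈ Finset.univ.filter
      (fun g' => ∃ π : Equiv.Perm (Fin n), relabel π g = g'), f g'

/-- Order of the automorphism group of `g`. -/
def autCard {n : ℕ} {γ : Type*} [DecidableEq γ] (g : Graph n γ) : ℕ :=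
  (Finset.univ.filter (fun π : Equiv.Perm (Fin n) => relabel π g = g)).card

/-!
Per edge, the information `log₂ (P_B(b) / P(a, b))` has mean `H(A|B)`, so for labelled graphs the
claim is a law of large numbers over the `C(n,2)` edges. Replacing `G_b` by its structure
multiplies the marginal likelihood of `G_b` by at most `n!`, the size of its isomorphism class, and
it multiplies the joint likelihood by at most `n!` on average, hence by at most `2 ^ (ε C(n,2))`
outside an event controlled by Markov's inequality. Since `n!` is `2 ^ o(C(n,2))`, neither change
affects the limit.

A `Graph` also carries marks on the loops, which `cer` ignores, so the total mass of `cer` is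
`|α × β| ^ n` rather than `1`. Chebyshev's inequality would not beat this factor; a Chernoff bound,
exponential in `C(n,2)`, does.
-/

section Prob

lemma prob_nonneg {Ω : Type*} [Fintype Ω] {Q : Ω → ℝ} (hQ : ∀ ω, 0 ≤ Q ω) (E : Set Ω) :
    0 ≤ prob Q E :=
  Finset.sum_nonneg fun ω _ => Set.indicator_nonneg (fun ω' _ => hQ ω') ω

lemma prob_le_sum_of_le {Ω : Type*} [Fintype Ω] {Q R : Ω → ℝ} {E : Set Ω} (hR : ∀ ω, 0 ≤ R ω)
    (h : ∀ ω ∈ E, Q ω ≤ R ω) : prob Q E ≤ ∑ ω, R ω :=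
  Finset.sum_le_sum fun ω _ => Set.indicator_le' h (fun ω' _ => hR ω') ω

lemma prob_le_add {Ω : Type*} [Fintype Ω] {Q : Ω → ℝ} (hQ : ∀ ω, 0 ≤ Q ω) {E A B : Set Ω}
    (h : ∀ ω ∈ E, Q ω ≠ 0 → ω ∈ A ∪ B) : prob Q E ≤ prob Q A + prob Q B := by
  have hA : ∀ ω, 0 ≤ A.indicator Q ω := Set.indicator_nonneg fun ω _ => hQ ω
  have hB : ∀ ω, 0 ≤ B.indicator Q ω := Set.indicator_nonneg fun ω _ => hQ ω
  refine (prob_le_sum_of_le (fun ω => add_nonneg (hA ω) (hB ω)) fun ω hω => ?_).trans_eq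
    Finset.sum_add_distrib
  by_cases h0 : Q ω = 0
  · exact h0.trans_le (add_nonneg (hA ω) (hB ω))
  rcases h ω hω h0 with hmem | hmem
  · exact (Set.indicator_of_mem hmem Q).ge.trans (le_add_of_nonneg_right (hB ω))
  · exact (Set.indicator_of_mem hmem Q).ge.trans (le_add_of_nonneg_left (hA ω))

lemma tendsto_prob_zero_of_subset_union {Ω : ℕ → Type*} [∀ n, Fintype (Ω n)]
    (Q : ∀ n, Ω n → ℝ) (hQ : ∀ n ω, 0 ≤ Q n ω) {E A B : ∀ n, Set (Ω n)}
    (hA : Tendsto (fun n => prob (Q n) (A n)) atTop (nhds 0))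
    (hB : Tendsto (fun n => prob (Q n) (B n)) atTop (nhds 0))
    (h : ∀ᶠ n in atTop, ∀ ω ∈ E n, Q n ω ≠ 0 → ω ∈ A n ∪ B n) :
    Tendsto (fun n => prob (Q n) (E n)) atTop (nhds 0) :=
  squeeze_zero' (.of_forall fun n => prob_nonneg (hQ n) (E n))
    (h.mono fun n hn => prob_le_add (hQ n) hn) (by simpa only [add_zero] using hA.add hB)

end Prob

section Growth

lemma Cn2_pos {n : ℕ} (hn : 2 ≤ n) : 0 < Cn2 n :=
  Nat.cast_pos.mpr (Nat.choose_pos hn)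

lemma tendsto_pow_mul_factorial_mul_pow_choose_two (K : ℝ) {r : ℝ} (hr : |r| < 1) :
    Tendsto (fun n : ℕ => K ^ n * n.factorial * r ^ n.choose 2) atTop (nhds 0) := by
  set u : ℕ → ℝ := fun n => K ^ n * n.factorial * r ^ n.choose 2 with hu
  have hstep : ∀ n, u (n + 1) = K * ((n + 1) * r ^ n) * u n := fun n => by
    simp only [hu, Nat.factorial_succ, Nat.choose_succ_succ' n 1, Nat.choose_one_right]
    push_cast
    ring
  have hratio : Tendsto (fun n : ℕ => ‖K * ((n + 1) * r ^ n)‖) atTop (nhds 0) := by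
    simpa [add_mul] using (((tendsto_self_mul_const_pow_of_abs_lt_one hr).add
      (tendsto_pow_atTop_nhds_zero_of_abs_lt_one hr)).const_mul K).norm
  refine (summable_of_ratio_norm_eventually_le one_half_lt_one ?_).tendsto_atTop_zero
  filter_upwards [hratio.eventually_le_const one_half_pos] with n hn
  rw [hstep, norm_mul]
  gcongr

lemma two_rpow_neg_pow_choose_two (ε : ℝ) (n : ℕ) :
    ((2 : ℝ) ^ (-ε)) ^ n.choose 2 = ((2 : ℝ) ^ (ε * Cn2 n))⁻¹ := by
  rw [← Real.rpow_natCast, ← Real.rpow_mul two_pos.le, ← Real.rpow_neg two_pos.le, Cn2, neg_mul]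

lemma tendsto_pow_mul_factorial_mul_inv_two_rpow (K : ℝ) {ε : ℝ} (hε : 0 < ε) :
    Tendsto (fun n : ℕ => K ^ n * n.factorial * ((2 : ℝ) ^ (ε * Cn2 n))⁻¹) atTop (nhds 0) := by
  have hr : |(2 : ℝ) ^ (-ε)| < 1 := by
    rw [abs_of_pos (by positivity)]
    exact Real.rpow_lt_one_of_one_lt_of_neg one_lt_two (neg_lt_zero.mpr hε)
  simpa only [two_rpow_neg_pow_choose_two] using
    tendsto_pow_mul_factorial_mul_pow_choose_two K hr

lemma eventually_pow_mul_factorial_le_two_rpow (K : ℝ) {ε : ℝ} (hε : 0 < ε) :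
    ∀ᶠ n : ℕ in atTop, K ^ n * n.factorial ≤ (2 : ℝ) ^ (ε * Cn2 n) := by
  filter_upwards [(tendsto_pow_mul_factorial_mul_inv_two_rpow K hε).eventually_le_const one_pos]
    with n hn
  rwa [← div_eq_mul_inv, div_le_one (by positivity)] at hn

end Growth

section EdgeProducts

lemma sum_pi_prod_finset {ι κ R : Type*} [Fintype ι] [DecidableEq ι] [Fintype κ]
    [CommSemiring R] (s : Finset ι) (f : ι → κ → R) :
    ∑ g : ι → κ, ∏ i ∈ s, f i (g i) = (Fintype.card κ : R) ^ #sᶜ * ∏ i ∈ s, ∑ k, f i k :=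
  calc ∑ g : ι → κ, ∏ i ∈ s, f i (g i)
      = ∑ g : ι → κ, ∏ i, if i ∈ s then f i (g i) else 1 := by simp
    _ = ∏ i, ∑ k, if i ∈ s then f i k else 1 := by
        rw [Finset.prod_univ_sum, Fintype.piFinset_univ]
    _ = ∏ i, if i ∈ s then ∑ k, f i k else (Fintype.card κ : R) :=
        Finset.prod_congr rfl fun i _ => by split_ifs <;> simp
    _ = (Fintype.card κ : R) ^ #sᶜ * ∏ i ∈ s, ∑ k, f i k := by
        rw [Finset.prod_ite, Finset.prod_const, Finset.filter_mem_eq_inter, Finset.univ_inter,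
          Finset.filter_notMem_eq_sdiff, Finset.compl_eq_univ_sdiff, mul_comm]

lemma card_edgePairs (n : ℕ) : #(edgePairs n) = n.choose 2 := by
  simpa [Fintype.card_subtype, edgePairs] using Sym2.card_subtype_not_diag (α := Fin n)

lemma card_compl_edgePairs (n : ℕ) : #(edgePairs n)ᶜ = n := by
  simpa [Fintype.card_subtype, edgePairs, Finset.compl_filter]
    using Sym2.card_subtype_diag (α := Fin n)

lemma sum_edgePairs_sub_const {n : ℕ} (f : Sym2 (Fin n) → ℝ) (c : ℝ) :
    ∑ e ∈ edgePairs n, (f e - c) = ∑ e ∈ edgePairs n, f e - Cn2 n * c := by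
  rw [Finset.sum_sub_distrib, Finset.sum_const, card_edgePairs, nsmul_eq_mul, Cn2]

variable {α β : Type*} {n : ℕ} {P : α × β → ℝ}

lemma cer_nonneg (hP : ∀ x, 0 ≤ P x) (ga : Graph n α) (gb : Graph n β) : 0 ≤ cer P ga gb :=
  Finset.prod_nonneg fun _ _ => hP _

lemma prob_cer_nonneg [Fintype α] [Fintype β] (hP : ∀ x, 0 ≤ P x)
    (E : Set (Graph n α × Graph n β)) :
    0 ≤ prob (fun p : Graph n α × Graph n β => cer P p.1 p.2) E :=
  prob_nonneg (fun p => cer_nonneg hP p.1 p.2) E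

lemma sum_sum_cer [Fintype α] [Fintype β] (P : α × β → ℝ) (n : ℕ) :
    ∑ p : Graph n α × Graph n β, cer P p.1 p.2
      = (Fintype.card (α × β) : ℝ) ^ n * (∑ x, P x) ^ n.choose 2 := by
  have hpairs := sum_pi_prod_finset (edgePairs n) fun _ => P
  rw [card_compl_edgePairs, Finset.prod_const, card_edgePairs] at hpairs
  rw [← hpairs]
  exact Fintype.sum_equiv (Equiv.arrowProdEquivProdArrow _ _ _).symm _ _ fun _ => rfl

/-- The distribution of the second coordinate under a joint distribution `P`. -/
def marginalSnd [Fintype α] (P : α × β → ℝ) (b : β) : ℝ := ∑ a, P (a, b)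

lemma sum_cer_left [Fintype α] (P : α × β → ℝ) (gb : Graph n β) :
    ∑ ga : Graph n α, cer P ga gb = (Fintype.card α : ℝ) ^ n * erP (marginalSnd P) gb := by
  have hsum := sum_pi_prod_finset (edgePairs n) fun e a => P (a, gb e)
  rwa [card_compl_edgePairs] at hsum

end EdgeProducts

section LawOfLargeNumbers

lemma exists_pos_sum_mul_exp_lt_one {γ : Type*} [Fintype γ] {P : γ → ℝ} (hP1 : ∑ x, P x = 1)
    {f : γ → ℝ} (hf : ∑ x, P x * f x < 0) :
    ∃ t > 0, ∑ x, P x * Real.exp (t * f x) < 1 := by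
  have hderiv : HasDerivAt (fun t => ∑ x, P x * Real.exp (t * f x)) (∑ x, P x * f x) 0 := by
    refine HasDerivAt.fun_sum fun x _ => ?_
    simpa using (((hasDerivAt_id (0 : ℝ)).mul_const (f x)).exp).const_mul (P x)
  have hslope := hderiv.tendsto_slope_zero_right.eventually_lt_const hf
  obtain ⟨t, hlt, ht⟩ := (hslope.and self_mem_nhdsWithin).exists
  refine ⟨t, ht, sub_neg.mp ?_⟩
  simpa [hP1] using (smul_neg_iff_of_pos_left (inv_pos.mpr ht)).mp hlt

variable {α β : Type*} [Fintype α] [Fintype β] {P : α × β → ℝ}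

lemma prob_sum_edgePairs_nonneg_le (hP : ∀ x, 0 ≤ P x) (f : α × β → ℝ) {t : ℝ} (ht : 0 ≤ t)
    (n : ℕ) :
    prob (fun p : Graph n α × Graph n β => cer P p.1 p.2)
        {p | 0 ≤ ∑ e ∈ edgePairs n, f (p.1 e, p.2 e)}
      ≤ (Fintype.card (α × β) : ℝ) ^ n * (∑ x, P x * Real.exp (t * f x)) ^ n.choose 2 := by
  have htilt : ∀ x, 0 ≤ P x * Real.exp (t * f x) := fun x => mul_nonneg (hP x) (Real.exp_pos _).le
  rw [← sum_sum_cer]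
  refine prob_le_sum_of_le (fun p => cer_nonneg htilt p.1 p.2) fun p hp => ?_
  rw [cer, cer, Finset.prod_mul_distrib, ← Real.exp_sum, ← Finset.mul_sum]
  exact le_mul_of_one_le_right (cer_nonneg hP _ _) (Real.one_le_exp (mul_nonneg ht hp))

lemma tendsto_prob_sum_edgePairs_nonneg (hP : ∀ x, 0 ≤ P x) (hP1 : ∑ x, P x = 1)
    {f : α × β → ℝ} (hf : ∑ x, P x * f x < 0) :
    Tendsto (fun n => prob (fun p : Graph n α × Graph n β => cer P p.1 p.2)
      {p | 0 ≤ ∑ e ∈ edgePairs n, f (p.1 e, p.2 e)}) atTop (nhds 0) := by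
  obtain ⟨t, ht, hlt⟩ := exists_pos_sum_mul_exp_lt_one hP1 hf
  have hnonneg : 0 ≤ ∑ x, P x * Real.exp (t * f x) :=
    Finset.sum_nonneg fun x _ => mul_nonneg (hP x) (Real.exp_pos _).le
  refine squeeze_zero (fun n => prob_cer_nonneg hP _) (fun n => ?_)
    (tendsto_pow_mul_factorial_mul_pow_choose_two (Fintype.card (α × β))
      ((abs_of_nonneg hnonneg).trans_lt hlt))
  refine (prob_sum_edgePairs_nonneg_le hP f ht.le n).trans ?_
  gcongr
  exact le_mul_of_one_le_right (by positivity) (mod_cast n.factorial_pos)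

lemma tendsto_prob_sum_edgePairs_sub_mean (hP : ∀ x, 0 ≤ P x) (hP1 : ∑ x, P x = 1)
    (f : α × β → ℝ) {ε : ℝ} (hε : 0 < ε) :
    Tendsto (fun n => prob (fun p : Graph n α × Graph n β => cer P p.1 p.2)
      {p | ε * Cn2 n < |∑ e ∈ edgePairs n, f (p.1 e, p.2 e) - Cn2 n * ∑ x, P x * f x|})
      atTop (nhds 0) := by
  set μ := ∑ x, P x * f x with hμ
  have hupper := tendsto_prob_sum_edgePairs_nonneg hP hP1 (f := fun x => f x - (μ + ε)) (by
    simp only [mul_sub, Finset.sum_sub_distrib, ← Finset.sum_mul, hP1, ← hμ]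
    linarith)
  have hlower := tendsto_prob_sum_edgePairs_nonneg hP hP1 (f := fun x => -f x - (ε - μ)) (by
    simp only [mul_sub, mul_neg, Finset.sum_sub_distrib, Finset.sum_neg_distrib,
      ← Finset.sum_mul, hP1, ← hμ]
    linarith)
  simp only [sum_edgePairs_sub_const, Finset.sum_neg_distrib] at hupper hlower
  refine tendsto_prob_zero_of_subset_union (Ω := fun n => Graph n α × Graph n β)
    (fun n p => cer P p.1 p.2) (fun n p => cer_nonneg hP p.1 p.2) hupper hlower
    (.of_forall fun n p hp _ => ?_)
  have hdev : ε * Cn2 n < |∑ e ∈ edgePairs n, f (p.1 e, p.2 e) - Cn2 n * μ| := hp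
  rcases lt_abs.mp hdev with habove | hbelow
  · exact .inl (show (0 : ℝ) ≤ _ by linarith)
  · exact .inr (show (0 : ℝ) ≤ _ by linarith)

end LawOfLargeNumbers

section IsomorphismClass

lemma sym2Map_bijective {n : ℕ} (π : Equiv.Perm (Fin n)) :
    Function.Bijective (Sym2.map π : Sym2 (Fin n) → Sym2 (Fin n)) :=
  Finite.injective_iff_bijective.mp (Sym2.map.injective π.injective)

variable {n : ℕ} {γ : Type*}

lemma relabel_one (g : Graph n γ) : relabel 1 g = g :=
  funext fun e => congrArg g (congrFun Sym2.map_id e)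

lemma relabel_bijective (π : Equiv.Perm (Fin n)) :
    Function.Bijective (relabel π : Graph n γ → Graph n γ) :=
  ((Equiv.ofBijective _ (sym2Map_bijective π.symm)).symm.arrowCongr (Equiv.refl γ)).bijective

lemma erP_relabel (Q : γ → ℝ) (π : Equiv.Perm (Fin n)) (g : Graph n γ) :
    erP Q (relabel π g) = erP Q g :=
  Finset.prod_bijective _ (sym2Map_bijective π.symm)
    (fun e => by simp [edgePairs, Sym2.isDiag_map π.symm.injective]) fun _ _ => rfl

variable [Fintype γ] [DecidableEq γ] {f : Graph n γ → ℝ}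

lemma le_isoSum (hf : ∀ g, 0 ≤ f g) (g : Graph n γ) : f g ≤ isoSum f g :=
  Finset.single_le_sum (fun g' _ => hf g')
    (Finset.mem_filter.mpr ⟨Finset.mem_univ g, 1, relabel_one g⟩)

lemma isoSum_le_sum_relabel (hf : ∀ g, 0 ≤ f g) (g : Graph n γ) :
    isoSum f g ≤ ∑ π : Equiv.Perm (Fin n), f (relabel π g) := by
  have himage : ({g' | ∃ π : Equiv.Perm (Fin n), relabel π g = g'} : Finset (Graph n γ))
      = Finset.univ.image fun π => relabel π g := by
    ext g'
    simp
  rw [isoSum, himage]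
  exact Finset.sum_image_le_of_nonneg fun _ _ => hf _

lemma isoSum_le_factorial_mul (hf : ∀ g, 0 ≤ f g) (hinv : ∀ π g, f (relabel π g) = f g)
    (g : Graph n γ) : isoSum f g ≤ n.factorial * f g :=
  (isoSum_le_sum_relabel hf g).trans_eq (by simp [hinv, Fintype.card_perm])

end IsomorphismClass

section CondInfo

variable {α β : Type*} [Fintype α] {P : α × β → ℝ}

/-- The conditional information density `log₂ (1 / P_{A|B}(a|b))` at `x = (a, b)`, whose mean is
`H(A|B)`. Its value is junk where `P x = 0`. -/
noncomputable def condInfo (P : α × β → ℝ) (x : α × β) : ℝ :=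
  Real.logb 2 (marginalSnd P x.2) - Real.logb 2 (P x)

lemma sum_mul_condInfo [Fintype β] (P : α × β → ℝ) : ∑ x, P x * condInfo P x = condH P := by
  have hmarginal : ∑ x : α × β, P x * Real.logb 2 (marginalSnd P x.2)
      = ∑ b, marginalSnd P b * Real.logb 2 (marginalSnd P b) := by
    simp only [Fintype.sum_prod_type_right, marginalSnd, Finset.sum_mul]
  simp only [condInfo, mul_sub, Finset.sum_sub_distrib, hmarginal]
  simp only [condH, H2, marginalSnd, Real.logb_inv, mul_neg, Finset.sum_neg_distrib]
  ring

lemma erP_marginalSnd_pos (hP : ∀ x, 0 ≤ P x) {n : ℕ} {ga : Graph n α} {gb : Graph n β}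
    (h0 : cer P ga gb ≠ 0) : 0 < erP (marginalSnd P) gb :=
  Finset.prod_pos fun e he => Finset.sum_pos' (fun _ _ => hP _)
    ⟨ga e, Finset.mem_univ _, (hP _).lt_of_ne' (Finset.prod_ne_zero_iff.mp h0 e he)⟩

lemma sum_edgePairs_condInfo (hP : ∀ x, 0 ≤ P x) {n : ℕ} {ga : Graph n α} {gb : Graph n β}
    (h0 : cer P ga gb ≠ 0) :
    ∑ e ∈ edgePairs n, condInfo P (ga e, gb e)
      = Real.logb 2 (erP (marginalSnd P) gb) - Real.logb 2 (cer P ga gb) := by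
  simp only [condInfo, Finset.sum_sub_distrib]
  rw [erP, cer, Real.logb_prod _ _ (Finset.prod_ne_zero_iff.mp (erP_marginalSnd_pos hP h0).ne'),
    Real.logb_prod _ _ (Finset.prod_ne_zero_iff.mp h0)]

end CondInfo

section StructureLikelihood

variable {α β : Type*} [Fintype α] [Fintype β] {P : α × β → ℝ}

lemma sum_cer_relabel_right (P : α × β → ℝ) {n : ℕ} (π : Equiv.Perm (Fin n)) :
    ∑ p : Graph n α × Graph n β, cer P p.1 (relabel π p.2)
      = (Fintype.card (α × β) : ℝ) ^ n * (∑ x, P x) ^ n.choose 2 :=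
  (Fintype.sum_bijective (Prod.map id (relabel π))
    (Function.bijective_id.prodMap (relabel_bijective π)) _ _ fun _ => rfl).trans
    (sum_sum_cer P n)

lemma prob_mul_cer_lt_isoSum_le [DecidableEq β] (hP : ∀ x, 0 ≤ P x) (hP1 : ∑ x, P x = 1)
    {c : ℝ} (hc : 0 < c) (n : ℕ) :
    prob (fun p : Graph n α × Graph n β => cer P p.1 p.2)
        {p | c * cer P p.1 p.2 < isoSum (fun gb => cer P p.1 gb) p.2}
      ≤ (Fintype.card (α × β) : ℝ) ^ n * n.factorial * c⁻¹ := by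
  have hcer : ∀ (ga : Graph n α) (gb : Graph n β), 0 ≤ cer P ga gb := cer_nonneg hP
  calc prob (fun p : Graph n α × Graph n β => cer P p.1 p.2)
        {p | c * cer P p.1 p.2 < isoSum (fun gb => cer P p.1 gb) p.2}
      ≤ ∑ p : Graph n α × Graph n β,
          c⁻¹ * ∑ π : Equiv.Perm (Fin n), cer P p.1 (relabel π p.2) := by
        refine prob_le_sum_of_le (fun p => mul_nonneg (inv_nonneg.mpr hc.le)
          (Finset.sum_nonneg fun π _ => hcer _ _)) fun p hp => ?_
        rw [le_inv_mul_iff₀ hc]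
        exact hp.le.trans (isoSum_le_sum_relabel (hcer p.1) p.2)
    _ = (Fintype.card (α × β) : ℝ) ^ n * n.factorial * c⁻¹ := by
        rw [← Finset.mul_sum, Finset.sum_comm]
        simp only [sum_cer_relabel_right, hP1, one_pow, mul_one, Finset.sum_const,
          Finset.card_univ, Fintype.card_perm, Fintype.card_fin, nsmul_eq_mul]
        ring

lemma tendsto_prob_mul_cer_lt_isoSum [DecidableEq β] (hP : ∀ x, 0 ≤ P x) (hP1 : ∑ x, P x = 1)
    {ε : ℝ} (hε : 0 < ε) :
    Tendsto (fun n => prob (fun p : Graph n α × Graph n β => cer P p.1 p.2)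
      {p | (2 : ℝ) ^ (ε * Cn2 n) * cer P p.1 p.2 < isoSum (fun gb => cer P p.1 gb) p.2})
      atTop (nhds 0) :=
  squeeze_zero (fun _ => prob_cer_nonneg hP _)
    (fun n => prob_mul_cer_lt_isoSum_le hP hP1 (by positivity) n)
    (tendsto_pow_mul_factorial_mul_inv_two_rpow _ hε)

variable [DecidableEq β]

/-- The conditional probability `P_{Gₐ|S_b}(ga | S_b)`, where `S_b` is the structure of `gb`. It
contains a factor `|α| ^ (-n)` coming from the marks of `ga` on the loops. -/
noncomputable def condProbStructure {n : ℕ} (P : α × β → ℝ) (ga : Graph n α) (gb : Graph n β) :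
    ℝ :=
  isoSum (fun gb' => cer P ga gb') gb / isoSum (fun gb' => ∑ ga' : Graph n α, cer P ga' gb') gb

lemma erP_le_isoSum_sum_cer [Nonempty α] (hP : ∀ x, 0 ≤ P x) {n : ℕ} (gb : Graph n β) :
    erP (marginalSnd P) gb ≤ isoSum (fun gb' => ∑ ga' : Graph n α, cer P ga' gb') gb := by
  refine le_trans ?_ (le_isoSum (fun _ => Finset.sum_nonneg fun _ _ => cer_nonneg hP _ _) gb)
  rw [sum_cer_left]
  exact le_mul_of_one_le_left (Finset.prod_nonneg fun _ _ => Finset.sum_nonneg fun _ _ => hP _)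
    (one_le_pow₀ (mod_cast Fintype.card_pos))

lemma isoSum_sum_cer_le (hP : ∀ x, 0 ≤ P x) {n : ℕ} (gb : Graph n β) :
    isoSum (fun gb' => ∑ ga' : Graph n α, cer P ga' gb') gb
      ≤ (Fintype.card α : ℝ) ^ n * n.factorial * erP (marginalSnd P) gb := by
  refine (isoSum_le_factorial_mul (fun _ => Finset.sum_nonneg fun _ _ => cer_nonneg hP _ _)
    (fun π g => ?_) gb).trans_eq ?_
  · simp only [sum_cer_left, erP_relabel]
  · rw [sum_cer_left]
    ring

lemma abs_logb_inv_condProbStructure_sub_le [Nonempty α] (hP : ∀ x, 0 ≤ P x) {n : ℕ}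
    {ga : Graph n α} {gb : Graph n β} (h0 : cer P ga gb ≠ 0) {s : ℝ}
    (hnum : isoSum (fun gb' => cer P ga gb') gb ≤ 2 ^ s * cer P ga gb)
    (hfact : (Fintype.card α : ℝ) ^ n * n.factorial ≤ 2 ^ s) :
    |Real.logb 2 (condProbStructure P ga gb)⁻¹ - ∑ e ∈ edgePairs n, condInfo P (ga e, gb e)|
      ≤ s := by
  have logb_le_add : ∀ {x y : ℝ}, 0 < x → 0 < y → y ≤ 2 ^ s * x →
      Real.logb 2 y ≤ s + Real.logb 2 x := fun {x y} hx hy hyx => by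
    rw [← Real.logb_rpow two_pos (by norm_num : (2 : ℝ) ≠ 1) (x := s),
      ← Real.logb_mul (by positivity) hx.ne']
    exact Real.logb_le_logb_of_le one_lt_two hy hyx
  have hcer : 0 < cer P ga gb := (cer_nonneg hP ga gb).lt_of_ne' h0
  have herP : 0 < erP (marginalSnd P) gb := erP_marginalSnd_pos hP h0
  have hnum_ge := le_isoSum (fun gb' => cer_nonneg hP ga gb') gb
  have hden_ge := erP_le_isoSum_sum_cer hP gb
  have hden_le := (isoSum_sum_cer_le hP gb).trans (mul_le_mul_of_nonneg_right hfact herP.le)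
  have hnum_pos := hcer.trans_le hnum_ge
  have hden_pos := herP.trans_le hden_ge
  rw [condProbStructure, inv_div, Real.logb_div hden_pos.ne' hnum_pos.ne',
    sum_edgePairs_condInfo hP h0, abs_le]
  have hlog_num := logb_le_add hcer hnum_pos hnum
  have hlog_den := logb_le_add herP hden_pos hden_le
  have hlog_num_ge := Real.logb_le_logb_of_le one_lt_two hcer hnum_ge
  have hlog_den_ge := Real.logb_le_logb_of_le one_lt_two herP hden_ge
  constructor <;> linarith

end StructureLikelihood

lemma abs_inv_mul_sub_le {m r l h δ : ℝ} (hm : 0 < m) (hrl : |r - l| ≤ δ / 2 * m)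
    (hl : |l - m * h| ≤ δ / 2 * m) : |m⁻¹ * r - h| ≤ δ := by
  have hdist : |r - m * h| ≤ δ * m := (abs_sub_le r l (m * h)).trans (by linarith)
  rwa [show m⁻¹ * r - h = (r - m * h) / m by field_simp, abs_div, abs_of_pos hm, div_le_iff₀ hm]

/-- `C(n,2)⁻¹ log(1/P_{Gₐ|S_b}(Gₐ|S_b)) → H(A|B)` in probability under the
CER model, where `P_{Gₐ|S_b}` is the conditional probability of the labelled graph `Gₐ`
given the structure `S_b` of `G_b`. -/
theorem stmt9 {α β : Type*} [Fintype α] [Fintype β] [DecidableEq α] [DecidableEq β]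
    (P : α × β → ℝ) (hP0 : ∀ x, 0 ≤ P x) (hP1 : ∑ x, P x = 1) :
    ∀ δ : ℝ, 0 < δ →
      Filter.Tendsto (fun n : ℕ =>
          prob (fun p : Graph n α × Graph n β => cer P p.1 p.2)
            {p : Graph n α × Graph n β |
              δ < |(Cn2 n)⁻¹ * Real.logb 2
                  (isoSum (fun gb' => cer P p.1 gb') p.2 /
                    isoSum (fun gb' => ∑ ga' : Graph n α, cer P ga' gb') p.2)⁻¹ -
                condH P|})
        Filter.atTop (nhds 0) := by
  intro δ hδ
  have : Nonempty α := by
    by_contra! hempty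
    simp at hP1
  have hinfo := tendsto_prob_sum_edgePairs_sub_mean hP0 hP1 (condInfo P) (half_pos hδ)
  rw [sum_mul_condInfo] at hinfo
  have hiso := tendsto_prob_mul_cer_lt_isoSum hP0 hP1 (half_pos hδ)
  refine tendsto_prob_zero_of_subset_union (Ω := fun n => Graph n α × Graph n β)
    (fun n p => cer P p.1 p.2) (fun n p => cer_nonneg hP0 p.1 p.2) hinfo hiso ?_
  filter_upwards [eventually_pow_mul_factorial_le_two_rpow (Fintype.card α) (half_pos hδ),
    eventually_ge_atTop 2] with n hfact hn p hp h0
  by_contra hgood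
  obtain ⟨hlabelled, hnum⟩ := not_or.mp hgood
  exact hp.not_ge (abs_inv_mul_sub_le (Cn2_pos hn)
    (abs_logb_inv_condProbStructure_sub_le hP0 h0 (not_lt.mp hnum) hfact) (not_lt.mp hlabelled))

end GraphSI
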